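/- Let a > 0. Every separated sequence Λ ⊂ ℝ with lower Beurling density D⁻(Λ) > 1 is a sampling sequence for the Gaussian shift-invariant space V²_a. -/

import Mathlib

open Filter MeasureTheory

/-- `gaussShiftSum c coef x = ∑_{n∈ℤ} coef n · e^{-c(x-n)²}`, the generic element of the
Gaussian shift-invariant space `V²_c`. -/
noncomputable def gaussShiftSum (c : ℂ) (coef : ℤ → ℂ) (x : ℝ) : ℂ :=
  ∑' n : ℤ, coef n * Complex.exp (-c * ((x : ℂ) - (n : ℂ)) ^ 2)

/-- A set `Λ ⊆ ℝ` is separated if distinct points are at distance at least some `ε > 0`. -/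
def IsSeparatedSet (Λ : Set ℝ) : Prop :=
  ∃ ε > 0, ∀ x ∈ Λ, ∀ y ∈ Λ, x ≠ y → ε ≤ |x - y|

/-- `Λ` is a sampling sequence for `V²_c`:
`A‖f‖² ≤ ∑_{λ∈Λ} |f(λ)|² ≤ B‖f‖²`, where `‖f‖²_{V²} = ∑ |c_n|²`. -/
def IsSamplingV2 (c : ℂ) (Λ : Set ℝ) : Prop :=
  ∃ A > 0, ∃ B > 0, ∀ coef : ℤ → ℂ, Summable (fun n => ‖coef n‖ ^ 2) →
    A * (∑' n : ℤ, ‖coef n‖ ^ 2) ≤ (∑' lam : Λ, ‖gaussShiftSum c coef (lam : ℝ)‖ ^ 2) ∧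
    (∑' lam : Λ, ‖gaussShiftSum c coef (lam : ℝ)‖ ^ 2) ≤ B * (∑' n : ℤ, ‖coef n‖ ^ 2)

/-- `Λ` is an interpolating sequence for `V²_c`: every `ℓ²` data on `Λ` is interpolated by
some `f ∈ V²_c`. -/
def IsInterpolatingV2 (c : ℂ) (Λ : Set ℝ) : Prop :=
  ∀ a : Λ → ℂ, Summable (fun lam => ‖a lam‖ ^ 2) →
    ∃ coef : ℤ → ℂ, Summable (fun n => ‖coef n‖ ^ 2) ∧
      ∀ lam : Λ, gaussShiftSum c coef (lam : ℝ) = a lam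

/-- A complete interpolating sequence is one that is both sampling and interpolating. -/
def IsCompleteInterpolatingV2 (c : ℂ) (Λ : Set ℝ) : Prop :=
  IsSamplingV2 c Λ ∧ IsInterpolatingV2 c Λ

/-- Lower Beurling density `D⁻(Λ) = lim_{r→∞} inf_x card(Λ ∩ [x,x+r]) / r`. -/
noncomputable def lowerBeurlingDensity (Λ : Set ℝ) : ℝ :=
  liminf (fun r : ℝ => (⨅ x : ℝ, ((Λ ∩ Set.Icc x (x + r)).ncard : ℝ)) / r) atTop

/-- Upper Beurling density `D⁺(Λ) = lim_{r→∞} sup_x card(Λ ∩ [x,x+r]) / r`. -/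
noncomputable def upperBeurlingDensity (Λ : Set ℝ) : ℝ :=
  limsup (fun r : ℝ => (⨆ x : ℝ, ((Λ ∩ Set.Icc x (x + r)).ncard : ℝ)) / r) atTop

/-- Schur-type estimate. -/
lemma schur_bound {α β : Type*} (u : α → ℝ) (K : α → β → ℝ) (C : ℝ)
    (hu : ∀ i, 0 ≤ u i) (hK : ∀ i j, 0 ≤ K i j) (hus : Summable u)
    (hKs : ∀ i, Summable (K i)) (hKC : ∀ i, ∑' j, K i j ≤ C) :
    (∀ j, Summable (fun i => u i * K i j)) ∧ Summable (fun j => ∑' i, u i * K i j) ∧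
      ∑' j, ∑' i, u i * K i j ≤ C * ∑' i, u i := by
  have h1 : Summable (fun i => ∑' j, u i * K i j) := by
    refine Summable.of_nonneg_of_le (fun i => tsum_nonneg fun j => mul_nonneg (hu i) (hK i j))
      (fun i => ?_) (hus.mul_left C)
    rw [tsum_mul_left, mul_comm C]
    exact mul_le_mul_of_nonneg_left (hKC i) (hu i)
  have h2 : Summable (fun q : α × β => u q.1 * K q.1 q.2) := by
    refine (summable_prod_of_nonneg (f := fun q : α × β => u q.1 * K q.1 q.2)
      (fun q => mul_nonneg (hu q.1) (hK q.1 q.2))).mpr ?_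
    exact ⟨fun i => (hKs i).mul_left (u i), h1⟩
  have h3 : Summable (fun q : β × α => u q.2 * K q.2 q.1) :=
    (Equiv.prodComm β α).summable_iff.mpr h2
  have h4 := (summable_prod_of_nonneg (f := fun q : β × α => u q.2 * K q.2 q.1)
      (fun q => mul_nonneg (hu q.2) (hK q.2 q.1))).mp h3
  refine ⟨h4.1, h4.2, ?_⟩
  have h5 : ∑' j, ∑' i, u i * K i j = ∑' i, ∑' j, u i * K i j :=
    Summable.tsum_comm (f := fun i j => u i * K i j) h2
  rw [h5, ← tsum_mul_left]
  refine Summable.tsum_le_tsum (fun i => ?_) h1 (hus.mul_left C)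
  rw [tsum_mul_left, mul_comm C]
  exact mul_le_mul_of_nonneg_left (hKC i) (hu i)

lemma summable_exp_abs (s : ℝ) (hs : 0 < s) : Summable (fun m : ℤ => Real.exp (-s * |(m : ℝ)|)) := by
  have h : Summable (fun m : ℕ => Real.exp (-s * m)) := by
    have := Real.summable_exp_nat_mul_iff.mpr (show -s < 0 by linarith)
    refine this.congr fun m => ?_
    ring_nf
  refine Summable.of_nat_of_neg ?_ ?_
  · simpa using h
  · simpa using h

lemma exp_abs_shift (s : ℝ) (hs : 0 < s) (x : ℝ) :
    Summable (fun m : ℤ => Real.exp (-s * |(m : ℝ) - x|)) ∧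
    ∑' m : ℤ, Real.exp (-s * |(m : ℝ) - x|) ≤
      Real.exp s * ∑' m : ℤ, Real.exp (-s * |(m : ℝ)|) := by
  have h0 := (summable_exp_abs s hs).mul_left (Real.exp s)
  have h1 : Summable (fun m : ℤ => Real.exp s * Real.exp (-s * |((m - ⌊x⌋ : ℤ) : ℝ)|)) :=
    (Equiv.subRight ⌊x⌋).summable_iff.mpr h0
  have h2 : ∀ m : ℤ, Real.exp (-s * |(m : ℝ) - x|) ≤
      Real.exp s * Real.exp (-s * |((m - ⌊x⌋ : ℤ) : ℝ)|) := by
    intro m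
    rw [← Real.exp_add, Real.exp_le_exp]
    have : |((m - ⌊x⌋ : ℤ) : ℝ)| ≤ |(m : ℝ) - x| + 1 := by
      have e : ((m - ⌊x⌋ : ℤ) : ℝ) = (m - x) + (x - ⌊x⌋) := by push_cast; ring
      rw [e]
      refine (abs_add_le _ _).trans ?_
      have := Int.floor_le x
      have := Int.lt_floor_add_one x
      rw [abs_of_nonneg (show 0 ≤ x - ⌊x⌋ by linarith)]
      linarith
    nlinarith
  have h3 := Summable.of_nonneg_of_le (fun m => (Real.exp_pos _).le) h2 h1
  refine ⟨h3, ?_⟩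
  refine (Summable.tsum_le_tsum h2 h3 h1).trans ?_
  rw [tsum_mul_left]
  refine le_of_eq ?_
  congr 1
  exact (Equiv.subRight ⌊x⌋).tsum_eq (fun m : ℤ => Real.exp (-s * |(m : ℝ)|))

lemma exp_abs_sep (s ε : ℝ) (hs : 0 < s) (hε : 0 < ε) (Λ : Set ℝ)
    (hΛ : ∀ x ∈ Λ, ∀ y ∈ Λ, x ≠ y → ε ≤ |x - y|) :
    ∃ C, 0 < C ∧ ∀ x : ℝ, Summable (fun l : Λ => Real.exp (-s * |(l : ℝ) - x|)) ∧
      ∑' l : Λ, Real.exp (-s * |(l : ℝ) - x|) ≤ C := by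
  have hsε : 0 < s * ε := mul_pos hs hε
  refine ⟨Real.exp (s * ε) * (Real.exp (s * ε) * ∑' m : ℤ, Real.exp (-(s * ε) * |(m : ℝ)|)), ?_, ?_⟩
  · have : 0 < ∑' m : ℤ, Real.exp (-(s * ε) * |(m : ℝ)|) :=
      (summable_exp_abs _ hsε).tsum_pos (fun _ => (Real.exp_pos _).le) 0 (Real.exp_pos _)
    positivity
  intro x
  obtain ⟨h1, h2⟩ := exp_abs_shift (s * ε) hsε (x / ε)
  have hinj : Function.Injective (fun l : Λ => ⌊(l : ℝ) / ε⌋) := by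
    intro l m hlm
    by_contra hne
    have h := hΛ l l.2 m m.2 (fun h => hne (Subtype.ext h))
    have h3 := Int.abs_sub_lt_one_of_floor_eq_floor hlm
    rw [← sub_div, abs_div, abs_of_pos hε, div_lt_one hε] at h3
    linarith
  have h3 : ∀ l : Λ, Real.exp (-s * |(l : ℝ) - x|) ≤ Real.exp (s * ε) *
      Real.exp (-(s * ε) * |((⌊(l : ℝ) / ε⌋ : ℤ) : ℝ) - x / ε|) := by
    intro l
    rw [← Real.exp_add, Real.exp_le_exp]
    have h4 : |((⌊(l : ℝ) / ε⌋ : ℤ) : ℝ) - x / ε| ≤ |(l : ℝ) - x| / ε + 1 := by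
      have e : |(l : ℝ) - x| / ε = |(l : ℝ) / ε - x / ε| := by
        rw [← sub_div, abs_div, abs_of_pos hε]
      rw [e]
      have := Int.floor_le ((l : ℝ) / ε)
      have := Int.lt_floor_add_one ((l : ℝ) / ε)
      rw [abs_le]
      constructor <;> cases abs_cases ((l : ℝ) / ε - x / ε) <;> linarith
    have h8 := mul_le_mul_of_nonneg_left h4 hsε.le
    have h9 : s * ε * (|(l : ℝ) - x| / ε + 1) = s * |(l : ℝ) - x| + s * ε := by field_simp
    linarith
  have h6 : Summable (fun l : Λ => Real.exp (s * ε) *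
      Real.exp (-(s * ε) * |((⌊(l : ℝ) / ε⌋ : ℤ) : ℝ) - x / ε|)) :=
    (h1.comp_injective hinj).mul_left _
  have h7 := Summable.of_nonneg_of_le (fun m => (Real.exp_pos _).le) h3 h6
  refine ⟨h7, (Summable.tsum_le_tsum h3 h7 h6).trans ?_⟩
  rw [tsum_mul_left]
  refine mul_le_mul_of_nonneg_left (le_trans ?_ h2) (Real.exp_pos _).le
  exact Summable.tsum_le_tsum_of_inj (fun l : Λ => ⌊(l : ℝ) / ε⌋) hinj
    (fun _ _ => (Real.exp_pos _).le) (fun _ => le_rfl) (h1.comp_injective hinj) h1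

/-- Division by simple zeros. -/
lemma divide_zeros (U : Set ℂ) (hU : IsOpen U) (S : Finset ℂ) :
    ∀ H : ℂ → ℂ, (↑S ⊆ U) → DifferentiableOn ℂ H U → (∀ s ∈ S, H s = 0) →
    ∃ Q : ℂ → ℂ, DifferentiableOn ℂ Q U ∧ ∀ w, H w = (∏ s ∈ S, (w - s)) * Q w := by
  induction S using Finset.induction_on with
  | empty => intro H _ hd _; exact ⟨H, hd, by simp⟩
  | insert s S hs ih =>
    intro H hSU hd hz
    have hsU : s ∈ U := hSU (by simp)
    have hd' : DifferentiableOn ℂ (dslope H s) U :=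
      (Complex.differentiableOn_dslope (hU.mem_nhds hsU)).mpr hd
    have heq : ∀ w, H w = (w - s) * dslope H s w := by
      intro w
      have := sub_smul_dslope H s w
      rw [hz s (by simp), sub_zero] at this
      rw [← this]; rfl
    obtain ⟨Q, hQ, hQe⟩ := ih (dslope H s) (fun t ht => hSU (by simp at ht ⊢; tauto)) hd' (by
      intro t ht
      have h1 := heq t
      rw [hz t (by simp [ht])] at h1
      have : t - s ≠ 0 := sub_ne_zero.mpr (by rintro rfl; exact hs ht)
      rcases mul_eq_zero.mp h1.symm with h | h
      · exact absurd h this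
      · exact h)
    refine ⟨Q, hQ, fun w => ?_⟩
    rw [heq, hQe, Finset.prod_insert hs]; ring

/-- maximum modulus on an annulus -/
lemma max_mod_annulus (r R C : ℝ) (hr : 0 < r) (hr1 : r < 1) (hR : 1 < R) (Q : ℂ → ℂ)
    (hQ : DifferentiableOn ℂ Q {0}ᶜ)
    (h1 : ∀ w, ‖w‖ = r → ‖Q w‖ ≤ C) (h2 : ∀ w, ‖w‖ = R → ‖Q w‖ ≤ C) (w : ℂ) (hw : ‖w‖ = 1) :
    ‖Q w‖ ≤ C := by
  set U : Set ℂ := (fun w : ℂ => ‖w‖) ⁻¹' Set.Ioo r R with hUdef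
  have hUo : IsOpen U := isOpen_Ioo.preimage continuous_norm
  have hcl : closure U ⊆ (fun w : ℂ => ‖w‖) ⁻¹' Set.Icc r R :=
    closure_minimal (Set.preimage_mono Set.Ioo_subset_Icc_self) (isClosed_Icc.preimage continuous_norm)
  refine Complex.norm_le_of_forall_mem_frontier_norm_le (U := U) ?_ ?_ ?_ (subset_closure ?_)
  · refine (Metric.isBounded_closedBall (x := (0 : ℂ)) (r := R)).subset ?_
    intro z hz; simp [hUdef] at hz ⊢; exact hz.2.le
  · refine DifferentiableOn.diffContOnCl (hQ.mono ?_)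
    intro z hz; have := hcl hz; simp at this ⊢
    rintro rfl; simp at this; linarith
  · intro z hz
    rw [hUo.frontier_eq] at hz
    have h3 := hcl hz.1
    have h4 := hz.2
    simp [hUdef] at h3 h4
    rcases h3.1.lt_or_eq with h | h
    · exact h2 z (le_antisymm h3.2 (h4 h))
    · exact h1 z h.symm
  · simp [hUdef, hw, hr1, hR]

lemma zero_bound (a T E M : ℝ) (p : ℕ) (S : Finset ℝ) (ha : 0 < a) (hT : 1 ≤ T)
    (hcard : S.card = 2 * p) (hS : ∀ l ∈ S, |l| ≤ T - 1 / 4)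
    (hE1 : ∑ l ∈ S, max l 0 ≤ E) (hE2 : ∑ l ∈ S, max (-l) 0 ≤ E) (H : ℂ → ℂ)
    (hH : DifferentiableOn ℂ H {0}ᶜ) (hz : ∀ l ∈ S, H ((Real.exp (2 * a * l) : ℝ) : ℂ) = 0)
    (h1 : ∀ w, ‖w‖ = Real.exp (-(2 * a * T)) → ‖H w‖ ≤ M)
    (h2 : ∀ w, ‖w‖ = Real.exp (2 * a * T) → ‖H w‖ ≤ M) (w : ℂ) (hw : ‖w‖ = 1) :
    ‖H w‖ ≤ 4 ^ p * ((1 - Real.exp (-(a / 2))) ^ (2 * p))⁻¹ *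
      Real.exp (2 * a * E - 2 * a * T * p) * M := by
  set κ := 1 - Real.exp (-(a / 2)) with hκ
  have hκ0 : 0 < κ := by
    have : Real.exp (-(a / 2)) < 1 := Real.exp_lt_one_iff.mpr (by linarith)
    linarith
  have hM : 0 ≤ M := (norm_nonneg _).trans (h2 ((Real.exp (2 * a * T) : ℝ) : ℂ) (by
    rw [Complex.norm_real, Real.norm_of_nonneg (Real.exp_pos _).le]))
  have hinj : Function.Injective (fun l : ℝ => ((Real.exp (2 * a * l) : ℝ) : ℂ)) := by
    intro x y hxy
    have h := Real.exp_injective (Complex.ofReal_injective hxy)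
    have ha2 : 2 * a ≠ 0 := by positivity
    exact mul_left_cancel₀ ha2 h
  obtain ⟨Q, hQ, hQe⟩ := divide_zeros {0}ᶜ isOpen_compl_singleton
    (S.image (fun l : ℝ => ((Real.exp (2 * a * l) : ℝ) : ℂ))) H (by
      intro z hz
      simp only [Finset.coe_image, Set.mem_image] at hz
      obtain ⟨l, _, rfl⟩ := hz
      simp only [Set.mem_compl_iff, Set.mem_singleton_iff, Complex.ofReal_eq_zero]
      exact (Real.exp_pos _).ne') hH (by
      intro z hz'
      obtain ⟨l, hl, rfl⟩ := Finset.mem_image.mp hz'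
      exact hz l hl)
  have hQe' : ∀ w, ‖H w‖ = (∏ l ∈ S, ‖w - ((Real.exp (2 * a * l) : ℝ) : ℂ)‖) * ‖Q w‖ := by
    intro w
    rw [hQe, Finset.prod_image hinj.injOn, norm_mul, norm_prod]
  set D := ∑ l ∈ S, max l 0 with hD
  set D' := ∑ l ∈ S, max (-l) 0 with hD'
  have hDD : ∑ l ∈ S, l = D - D' := by
    rw [hD, hD', ← Finset.sum_sub_distrib]
    refine Finset.sum_congr rfl fun l _ => ?_
    rcases le_total l 0 with h | h
    · rw [max_eq_right h, max_eq_left (by linarith)]; ring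
    · rw [max_eq_left h, max_eq_right (by linarith)]; ring
  set C := M * (κ ^ (2 * p))⁻¹ * Real.exp (2 * a * (E - D) - 2 * a * T * p) with hC
  have haT : 0 < a * T := by positivity
  have key : ‖w ^ p * Q w‖ ≤ C := by
    refine max_mod_annulus (Real.exp (-(2 * a * T))) (Real.exp (2 * a * T)) C (Real.exp_pos _)
      (Real.exp_lt_one_iff.mpr (by linarith)) (Real.one_lt_exp_iff.mpr (by positivity)) (fun w => w ^ p * Q w)
      ((differentiableOn_id.pow p).mul hQ) ?_ ?_ w hw
    · intro v hv
      have e1 : κ ^ (2 * p) * Real.exp (2 * a * (D - D')) ≤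
          ∏ l ∈ S, ‖v - ((Real.exp (2 * a * l) : ℝ) : ℂ)‖ := by
        rw [← hDD, Finset.mul_sum, Real.exp_sum, ← hcard, ← Finset.prod_const, ← Finset.prod_mul_distrib]
        refine Finset.prod_le_prod (fun l _ => by positivity) fun l hl => ?_
        have h3 := norm_sub_norm_le ((Real.exp (2 * a * l) : ℝ) : ℂ) v
        rw [norm_sub_rev, hv, Complex.norm_real, Real.norm_of_nonneg (Real.exp_pos _).le] at h3
        refine le_trans ?_ h3
        have h4 : Real.exp (-(2 * a * T)) ≤ Real.exp (-(a / 2)) * Real.exp (2 * a * l) := by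
          rw [← Real.exp_add, Real.exp_le_exp]
          have := (abs_le.mp (hS l hl)).1
          nlinarith
        rw [hκ]; linarith
      have e2 := h1 v hv
      rw [hQe'] at e2
      have e3 := (mul_le_mul_of_nonneg_right e1 (norm_nonneg (Q v))).trans e2
      rw [norm_mul, norm_pow, hv, ← Real.exp_nat_mul, hC]
      have e4 : ‖Q v‖ ≤ M * (κ ^ (2 * p))⁻¹ * Real.exp (-(2 * a * (D - D'))) := by
        rw [Real.exp_neg, mul_assoc, ← mul_inv, ← div_eq_mul_inv, le_div_iff₀ (by positivity)]
        linarith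
      calc Real.exp (p * -(2 * a * T)) * ‖Q v‖
          ≤ Real.exp (p * -(2 * a * T)) * (M * (κ ^ (2 * p))⁻¹ * Real.exp (-(2 * a * (D - D')))) := by gcongr
        _ = M * (κ ^ (2 * p))⁻¹ * Real.exp (-(2 * a * (D - D')) - 2 * a * T * p) := by
          rw [sub_eq_add_neg (-(2 * a * (D - D'))), Real.exp_add]; ring_nf
        _ ≤ _ := by
          gcongr
          nlinarith
    · intro v hv
      have e1 : κ ^ (2 * p) * Real.exp (2 * p * (2 * a * T)) ≤
          ∏ l ∈ S, ‖v - ((Real.exp (2 * a * l) : ℝ) : ℂ)‖ := by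
        have : Real.exp (2 * p * (2 * a * T)) = Real.exp (2 * a * T) ^ (2 * p) := by
          rw [← Real.exp_nat_mul]; push_cast; rfl
        rw [this, ← mul_pow, ← hcard, ← Finset.prod_const]
        refine Finset.prod_le_prod (fun l _ => by positivity) fun l hl => ?_
        have h3 := norm_sub_norm_le v ((Real.exp (2 * a * l) : ℝ) : ℂ)
        rw [hv, Complex.norm_real, Real.norm_of_nonneg (Real.exp_pos _).le] at h3
        refine le_trans ?_ h3
        have h4 : Real.exp (2 * a * l) ≤ Real.exp (-(a / 2)) * Real.exp (2 * a * T) := by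
          rw [← Real.exp_add, Real.exp_le_exp]
          have := (abs_le.mp (hS l hl)).2
          nlinarith
        rw [hκ]; linarith
      have e2 := h2 v hv
      rw [hQe'] at e2
      have e3 := (mul_le_mul_of_nonneg_right e1 (norm_nonneg (Q v))).trans e2
      rw [norm_mul, norm_pow, hv, ← Real.exp_nat_mul, hC]
      have e4 : ‖Q v‖ ≤ M * (κ ^ (2 * p))⁻¹ * Real.exp (-(2 * p * (2 * a * T))) := by
        rw [Real.exp_neg, mul_assoc, ← mul_inv, ← div_eq_mul_inv, le_div_iff₀ (by positivity)]
        linarith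
      calc Real.exp (p * (2 * a * T)) * ‖Q v‖
          ≤ Real.exp (p * (2 * a * T)) * (M * (κ ^ (2 * p))⁻¹ * Real.exp (-(2 * p * (2 * a * T)))) := by gcongr
        _ = M * (κ ^ (2 * p))⁻¹ * Real.exp (p * (2 * a * T) + (-(2 * p * (2 * a * T)))) := by
          rw [Real.exp_add]; ring_nf
        _ ≤ _ := by
          gcongr
          nlinarith
  have e1 : ∏ l ∈ S, ‖w - ((Real.exp (2 * a * l) : ℝ) : ℂ)‖ ≤ 4 ^ p * Real.exp (2 * a * D) := by
    have : (4 : ℝ) ^ p = 2 ^ S.card := by rw [hcard, pow_mul]; norm_num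
    rw [this, hD, Finset.mul_sum, Real.exp_sum, ← Finset.prod_const, ← Finset.prod_mul_distrib]
    refine Finset.prod_le_prod (fun l _ => norm_nonneg _) fun l hl => ?_
    refine (norm_sub_le _ _).trans ?_
    rw [hw, Complex.norm_real, Real.norm_of_nonneg (Real.exp_pos _).le]
    have h5 : 1 ≤ Real.exp (2 * a * max l 0) := Real.one_le_exp (by positivity)
    have h6 : Real.exp (2 * a * l) ≤ Real.exp (2 * a * max l 0) := by
      gcongr; exact le_max_left _ _
    linarith
  rw [norm_mul, norm_pow, hw, one_pow, one_mul] at key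
  rw [hQe']
  calc _ ≤ (4 ^ p * Real.exp (2 * a * D)) * C := by gcongr
    _ = _ := by
      rw [hC, show 2 * a * E - 2 * a * T * p = 2 * a * D + (2 * a * (E - D) - 2 * a * T * p) by ring,
        Real.exp_add]
      ring

lemma approx_zero_bound (a T E M μ ε : ℝ) (p : ℕ) (S : Finset ℝ) (ha : 0 < a) (hT : 1 ≤ T)
    (hε : 0 < ε) (hμ : 0 ≤ μ)
    (hcard : S.card = 2 * p) (hS : ∀ l ∈ S, |l| ≤ T - 1 / 4)
    (hsep : ∀ x ∈ S, ∀ y ∈ S, x ≠ y → ε ≤ |x - y|)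
    (hE1 : ∑ l ∈ S, max l 0 ≤ E) (hE2 : ∑ l ∈ S, max (-l) 0 ≤ E) (H : ℂ → ℂ)
    (hH : DifferentiableOn ℂ H {0}ᶜ) (hz : ∀ l ∈ S, ‖H ((Real.exp (2 * a * l) : ℝ) : ℂ)‖ ≤ μ)
    (h1 : ∀ w, ‖w‖ = Real.exp (-(2 * a * T)) → ‖H w‖ ≤ M)
    (h2 : ∀ w, ‖w‖ = Real.exp (2 * a * T) → ‖H w‖ ≤ M) (w : ℂ) (hw : ‖w‖ = 1) :
    ‖H w‖ ≤ 4 ^ p * ((1 - Real.exp (-(a / 2))) ^ (2 * p))⁻¹ *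
      Real.exp (2 * a * E - 2 * a * T * p) *
      (M + 2 * p * μ * (1 + 2 * Real.exp (2 * a * T) / (2 * a * ε * Real.exp (-(2 * a * T)))) ^ (2 * p))
      + 2 * p * μ * (1 + 2 * Real.exp (2 * a * T) / (2 * a * ε * Real.exp (-(2 * a * T)))) ^ (2 * p) := by
  classical
  set W := Real.exp (2 * a * T) with hW
  set ρ := 2 * a * ε * Real.exp (-(2 * a * T)) with hρ
  set K := (1 + 2 * W / ρ) ^ (2 * p) with hK
  have hρ0 : 0 < ρ := by positivity
  have hW0 : 0 < W := Real.exp_pos _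
  set v : ℝ → ℂ := fun l => ((Real.exp (2 * a * l) : ℝ) : ℂ) with hv
  have hinj : Function.Injective v := by
    intro x y hxy
    have h := Real.exp_injective (Complex.ofReal_injective hxy)
    have ha2 : 2 * a ≠ 0 := by positivity
    exact mul_left_cancel₀ ha2 h
  have hvn : ∀ l ∈ S, ‖v l‖ ≤ W := by
    intro l hl
    rw [hv]; simp only
    rw [Complex.norm_real, Real.norm_of_nonneg (Real.exp_pos _).le, hW, Real.exp_le_exp]
    have := (abs_le.mp (hS l hl)).2
    nlinarith
  have hvs0 : ∀ x ∈ S, ∀ y ∈ S, x < y → ρ ≤ Real.exp (2 * a * y) - Real.exp (2 * a * x) := by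
    intro x hx y hy hxy
    have h3 := hsep x hx y hy hxy.ne
    rw [abs_sub_comm, abs_of_pos (by linarith)] at h3
    have h4 : Real.exp (2 * a * y) = Real.exp (2 * a * x) * Real.exp (2 * a * (y - x)) := by
      rw [← Real.exp_add]; ring_nf
    have h5 := Real.add_one_le_exp (2 * a * (y - x))
    have h6 : Real.exp (-(2 * a * T)) ≤ Real.exp (2 * a * x) := by
      rw [Real.exp_le_exp]
      have := (abs_le.mp (hS x hx)).1
      nlinarith
    have h7 : 2 * a * ε ≤ Real.exp (2 * a * (y - x)) - 1 := by nlinarith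
    have h8 : (2 * a * ε) * Real.exp (-(2 * a * T)) ≤
        (Real.exp (2 * a * (y - x)) - 1) * Real.exp (2 * a * x) :=
      mul_le_mul h7 h6 (Real.exp_pos _).le (le_trans (by positivity) h7)
    rw [h4, hρ]; linarith
  have hvs : ∀ x ∈ S, ∀ y ∈ S, x ≠ y → ρ ≤ ‖v x - v y‖ := by
    intro x hx y hy hxy
    rw [hv]; simp only
    rw [← Complex.ofReal_sub, Complex.norm_real, Real.norm_eq_abs]
    rcases lt_or_gt_of_ne hxy with h | h
    · rw [abs_sub_comm]; exact (hvs0 x hx y hy h).trans (le_abs_self _)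
    · exact (hvs0 y hy x hx h).trans (le_abs_self _)
  set P := Lagrange.interpolate S v (fun l => H (v l)) with hP
  have hPv : ∀ l ∈ S, P.eval (v l) = H (v l) := fun l hl =>
    Lagrange.eval_interpolate_at_node _ hinj.injOn hl
  have hPb : ∀ z : ℂ, ‖z‖ ≤ W → ‖P.eval z‖ ≤ 2 * p * μ * K := by
    intro z hzW
    rw [hP, Lagrange.interpolate_apply, Polynomial.eval_finsetSum]
    refine (norm_sum_le _ _).trans ?_
    have : ∀ l ∈ S, ‖Polynomial.eval z (Polynomial.C (H (v l)) * Lagrange.basis S v l)‖ ≤ μ * K := by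
      intro l hl
      rw [Polynomial.eval_mul, Polynomial.eval_C, norm_mul]
      refine mul_le_mul (hz l hl) ?_ (norm_nonneg _) hμ
      rw [Lagrange.basis, Polynomial.eval_prod, norm_prod, hK]
      have h3 : ∀ m ∈ S.erase l, ‖Polynomial.eval z (Lagrange.basisDivisor (v l) (v m))‖ ≤ 1 + 2 * W / ρ := by
        intro m hm
        rw [Finset.mem_erase] at hm
        rw [Lagrange.basisDivisor]
        simp only [Polynomial.eval_mul, Polynomial.eval_C, Polynomial.eval_sub, Polynomial.eval_X, norm_mul, norm_inv]
        have h4 := hvs l hl m hm.2 (Ne.symm hm.1)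
        have h5 : ‖z - v m‖ ≤ 2 * W := (norm_sub_le _ _).trans (by linarith [hvn m hm.2])
        rw [inv_mul_eq_div]
        have : ‖z - v m‖ / ‖v l - v m‖ ≤ 2 * W / ρ := by gcongr
        linarith
      refine (Finset.prod_le_prod (fun _ _ => norm_nonneg _) h3).trans ?_
      rw [Finset.prod_const]
      refine pow_le_pow_right₀ ?_ ?_
      · have : 0 ≤ 2 * W / ρ := by positivity
        linarith
      · rw [← hcard]; exact Finset.card_le_card (Finset.erase_subset _ _)
    refine (Finset.sum_le_card_nsmul _ _ _ this).trans ?_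
    rw [hcard, nsmul_eq_mul]; push_cast; linarith
  have hW1 : 1 ≤ W := Real.one_le_exp (by positivity)
  have main := zero_bound a T E (M + 2 * p * μ * K) p S ha hT hcard hS hE1 hE2
    (fun z => H z - P.eval z) (hH.sub P.differentiable.differentiableOn)
    (fun l hl => sub_eq_zero.mpr (hPv l hl).symm)
    (fun z hz => (norm_sub_le _ _).trans (add_le_add (h1 z hz) (hPb z (by
      rw [hz]; exact (Real.exp_le_exp.mpr (by have : 0 < a * T := by positivity
                                              linarith))))))
    (fun z hz => (norm_sub_le _ _).trans (add_le_add (h2 z hz) (hPb z hz.le))) w hw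
  have h3 : ‖H w‖ ≤ ‖H w - P.eval w‖ + ‖P.eval w‖ := by
    have := norm_add_le (H w - P.eval w) (P.eval w)
    simpa using this
  exact h3.trans (add_le_add main (hPb w (by rw [hw]; exact hW1)))

lemma summable_gauss (a B : ℝ) (ha : 0 < a) :
    Summable (fun n : ℤ => Real.exp (B * |(n : ℝ)| - a * (n : ℝ) ^ 2)) := by
  refine Summable.of_nonneg_of_le (fun _ => (Real.exp_pos _).le) (fun n => ?_)
    ((summable_exp_abs 1 one_pos).mul_left (Real.exp ((B + 1) ^ 2 / (4 * a))))
  rw [← Real.exp_add, Real.exp_le_exp]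
  have h : (B + 1) ^ 2 / (4 * a) - (B + 1) * |(n : ℝ)| + a * (n : ℝ) ^ 2 =
      ((B + 1) - 2 * a * |(n : ℝ)|) ^ 2 / (4 * a) := by
    rw [← sq_abs (n : ℝ)]; field_simp; ring
  have h2 : 0 ≤ ((B + 1) - 2 * a * |(n : ℝ)|) ^ 2 / (4 * a) := by positivity
  linarith

/-- The Laurent series attached to the coefficients. -/
noncomputable def gaussLaurent (a : ℝ) (c : ℤ → ℂ) (w : ℂ) : ℂ :=
  ∑' n : ℤ, c n * ((Real.exp (-a * (n : ℝ) ^ 2) : ℝ) : ℂ) * w ^ n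

lemma norm_laurent_term (a : ℝ) (c : ℤ → ℂ) (hc : ∀ n : ℤ, ‖c n‖ ≤ Real.exp |(n : ℝ)|) (t : ℝ) (w : ℂ)
    (hw : ‖w‖ = Real.exp t) (n : ℤ) :
    ‖c n * ((Real.exp (-a * (n : ℝ) ^ 2) : ℝ) : ℂ) * w ^ n‖ ≤
      Real.exp (|(n : ℝ)| - a * (n : ℝ) ^ 2 + n * t) := by
  have he : Real.exp (n * t) = Real.exp t ^ n := by
    rw [mul_comm, Real.exp_mul, Real.rpow_intCast]
  rw [norm_mul, norm_mul, norm_zpow, hw, Complex.norm_real, Real.norm_of_nonneg (Real.exp_pos _).le,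
    ← he, show |(n : ℝ)| - a * (n : ℝ) ^ 2 + n * t = |(n : ℝ)| + -a * (n : ℝ) ^ 2 + n * t by ring,
    Real.exp_add, Real.exp_add]
  gcongr
  exact hc n

lemma laurent_diff (a : ℝ) (ha : 0 < a) (c : ℤ → ℂ) (hc : ∀ n : ℤ, ‖c n‖ ≤ Real.exp |(n : ℝ)|) :
    DifferentiableOn ℂ (gaussLaurent a c) {0}ᶜ := by
  intro w hw
  have hw0 : w ≠ 0 := hw
  set R := |Real.log ‖w‖| + 1 with hR
  set s : Set ℂ := (fun w : ℂ => ‖w‖) ⁻¹' Set.Ioo (Real.exp (-R)) (Real.exp R) with hs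
  have hso : IsOpen s := isOpen_Ioo.preimage continuous_norm
  have hws : w ∈ s := by
    have h0 : 0 < ‖w‖ := norm_pos_iff.mpr hw0
    simp only [hs, Set.mem_preimage, Set.mem_Ioo]
    rw [← Real.lt_log_iff_exp_lt h0, ← Real.log_lt_iff_lt_exp h0]
    constructor <;> cases abs_cases (Real.log ‖w‖) <;> linarith
  have hd : DifferentiableOn ℂ (gaussLaurent a c) s := by
    refine Complex.differentiableOn_tsum_of_summable_norm (summable_gauss a (1 + R) ha) ?_ hso ?_
    · intro n z hz
      have hz0 : z ≠ 0 := by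
        rintro rfl
        have := hz.1
        simp only [norm_zero] at this
        linarith [Real.exp_pos (-R)]
      exact ((differentiableAt_zpow.mpr (Or.inl hz0)).const_mul _).differentiableWithinAt
    · intro n z hz
      have h0 : 0 < ‖z‖ := (Real.exp_pos _).trans hz.1
      refine (norm_laurent_term a c hc (Real.log ‖z‖) z (Real.exp_log h0).symm n).trans ?_
      rw [Real.exp_le_exp]
      have h1 := (Real.lt_log_iff_exp_lt h0).mpr hz.1
      have h2 := (Real.log_lt_iff_lt_exp h0).mpr hz.2
      have h3 : n * Real.log ‖z‖ ≤ |(n : ℝ)| * R := by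
        refine (le_abs_self _).trans ?_
        rw [abs_mul]
        gcongr
        exact abs_le.mpr ⟨h1.le, h2.le⟩
      linarith
  exact (hd.differentiableAt (hso.mem_nhds hws)).differentiableWithinAt

lemma laurent_summable (a : ℝ) (ha : 0 < a)
    (t : ℝ) : Summable (fun n : ℤ => Real.exp (|(n : ℝ)| - a * (n : ℝ) ^ 2 + n * t)) := by
  refine Summable.of_nonneg_of_le (fun _ => (Real.exp_pos _).le) (fun n => ?_)
    (summable_gauss a (1 + |t|) ha)
  rw [Real.exp_le_exp]
  have : n * t ≤ |(n : ℝ)| * |t| := (le_abs_self _).trans (abs_mul _ _).le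
  linarith

lemma laurent_bound (a : ℝ) (ha : 0 < a) (c : ℤ → ℂ) (hc : ∀ n : ℤ, ‖c n‖ ≤ Real.exp |(n : ℝ)|)
    (σ : ℤ) (w : ℂ) (hw : ‖w‖ = Real.exp (2 * a * σ)) :
    ‖gaussLaurent a c w‖ ≤ Real.exp (a * (σ : ℝ) ^ 2 + |(σ : ℝ)|) *
      ∑' n : ℤ, Real.exp (1 * |(n : ℝ)| - a * (n : ℝ) ^ 2) := by
  have h1 := laurent_summable a ha (2 * a * σ)
  refine (tsum_of_norm_bounded h1.hasSum (norm_laurent_term a c hc _ w hw)).trans ?_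
  have h2 := (summable_gauss a 1 ha).mul_left (Real.exp (a * (σ : ℝ) ^ 2 + |(σ : ℝ)|))
  rw [← tsum_mul_left, ← (Equiv.subRight σ).tsum_eq (fun n : ℤ => Real.exp (a * (σ : ℝ) ^ 2 + |(σ : ℝ)|) *
    Real.exp (1 * |(n : ℝ)| - a * (n : ℝ) ^ 2))]
  refine Summable.tsum_le_tsum (fun n => ?_) h1 ((Equiv.subRight σ).summable_iff.mpr h2)
  rw [← Real.exp_add, Real.exp_le_exp, Equiv.subRight_apply]
  push_cast
  have : |(n : ℝ)| ≤ |(n : ℝ) - σ| + |(σ : ℝ)| := by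
    have := abs_add_le ((n : ℝ) - σ) σ
    simpa using this
  nlinarith

lemma laurent_coeff (a : ℝ) (ha : 0 < a) (c : ℤ → ℂ) (hc : ∀ n : ℤ, ‖c n‖ ≤ Real.exp |(n : ℝ)|)
    (B : ℝ) (hB : ∀ w : ℂ, ‖w‖ = 1 → ‖gaussLaurent a c w‖ ≤ B) : ‖c 0‖ ≤ B := by
  set F : ℤ → ℝ → ℂ := fun n θ => c n * ((Real.exp (-a * (n : ℝ) ^ 2) : ℝ) : ℂ) *
    (Complex.exp (θ * Complex.I)) ^ n with hF
  have hb : ∀ n θ, ‖F n θ‖ ≤ Real.exp (1 * |(n : ℝ)| - a * (n : ℝ) ^ 2) := by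
    intro n θ
    have := norm_laurent_term a c hc 0 (Complex.exp (θ * Complex.I))
      (by rw [Complex.norm_exp_ofReal_mul_I, Real.exp_zero]) n
    rw [mul_zero, add_zero] at this
    rw [one_mul]
    exact this
  have hs := summable_gauss a 1 ha
  have hsum := intervalIntegral.hasSum_integral_of_dominated_convergence
    (a := 0) (b := 2 * Real.pi) (μ := volume)
    (F := F) (f := fun θ : ℝ => gaussLaurent a c (Complex.exp (θ * Complex.I)))
    (fun n _ => Real.exp (1 * |(n : ℝ)| - a * (n : ℝ) ^ 2)) (by
      intro n
      refine Continuous.aestronglyMeasurable ?_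
      refine continuous_const.mul (Continuous.zpow₀ (by fun_prop) n fun θ => Or.inl (Complex.exp_ne_zero _)))
    (fun n => Eventually.of_forall fun θ _ => hb n θ)
    (Eventually.of_forall fun θ _ => hs)
    (by simp)
    (Eventually.of_forall fun θ _ => (Summable.of_norm_bounded hs (fun n => hb n θ)).hasSum)
  have hz : ∀ n : ℤ, n ≠ 0 → ∫ θ in (0 : ℝ)..(2 * Real.pi), F n θ = 0 := by
    intro n hn
    rw [hF]
    simp only
    rw [intervalIntegral.integral_const_mul]
    have hn' : (n : ℂ) * Complex.I ≠ 0 := mul_ne_zero (by exact_mod_cast hn) Complex.I_ne_zero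
    have e : ∀ θ : ℝ, Complex.exp (θ * Complex.I) ^ n = Complex.exp ((n : ℂ) * Complex.I * θ) := by
      intro θ
      rw [← Complex.exp_int_mul]; congr 1; ring
    simp_rw [e]
    rw [integral_exp_mul_complex hn']
    have e2 : (n : ℂ) * Complex.I * ((2 * Real.pi : ℝ) : ℂ) = n * (2 * Real.pi * Complex.I) := by
      push_cast; ring
    rw [e2, Complex.exp_int_mul_two_pi_mul_I]
    simp
  have h0 : ∫ θ in (0 : ℝ)..(2 * Real.pi), F 0 θ = 2 * Real.pi * c 0 := by
    simp [hF]
  have h1 := hsum.unique (hasSum_single 0 hz)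
  rw [h0] at h1
  have h2 := intervalIntegral.norm_integral_le_of_norm_le_const (a := 0) (b := 2 * Real.pi) (C := B)
    (f := fun θ : ℝ => gaussLaurent a c (Complex.exp (θ * Complex.I)))
    (fun θ _ => hB _ (Complex.norm_exp_ofReal_mul_I θ))
  rw [h1] at h2
  have hpi := Real.pi_pos
  rw [norm_mul, sub_zero, abs_of_pos (by positivity)] at h2
  have h3 : ‖(2 * Real.pi : ℂ)‖ = 2 * Real.pi := by
    rw [norm_mul, Complex.norm_real, Real.norm_of_nonneg hpi.le]; simp
  rw [h3] at h2
  nlinarith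

lemma gauss_eq_laurent (a : ℝ) (c : ℤ → ℂ) (x : ℝ) :
    gaussShiftSum (a : ℂ) c x = ((Real.exp (-a * x ^ 2) : ℝ) : ℂ) *
      gaussLaurent a c ((Real.exp (2 * a * x) : ℝ) : ℂ) := by
  rw [gaussShiftSum, gaussLaurent, ← tsum_mul_left]
  refine tsum_congr fun n => ?_
  have : Complex.exp (-a * ((x : ℂ) - n) ^ 2) = Complex.exp (-a * (x : ℂ) ^ 2) *
      Complex.exp (-a * (n : ℂ) ^ 2) * Complex.exp (2 * a * x) ^ n := by
    rw [← Complex.exp_int_mul, ← Complex.exp_add, ← Complex.exp_add]; congr 1; ring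
  rw [this]
  push_cast
  ring

lemma select_points (Λ : Set ℝ) (L : ℕ)
    (hΛ : ∀ x : ℝ, L + 1 ≤ (Λ ∩ Set.Icc x (x + (L - 1 / 2))).ncard) (J : ℕ) :
    ∃ S : Finset ℝ, ↑S ⊆ Λ ∧ S.card = 2 * (J * (L + 1)) ∧ (∀ l ∈ S, |l| ≤ (J : ℝ) * L - 1 / 4) ∧
      ∑ l ∈ S, max l 0 ≤ ((L : ℝ) + 1) * L * J * (J + 1) / 2 ∧
      ∑ l ∈ S, max (-l) 0 ≤ ((L : ℝ) + 1) * L * J * (J + 1) / 2 := by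
  classical
  have hsel : ∀ x : ℝ, ∃ A : Finset ℝ, ↑A ⊆ Λ ∧ A.card = L + 1 ∧
      ∀ l ∈ A, x ≤ l ∧ l ≤ x + (L - 1 / 2) := by
    intro x
    obtain ⟨t, ht, htc⟩ := Set.exists_subset_card_eq (hΛ x)
    have hfin : t.Finite := Set.finite_of_ncard_ne_zero (by omega)
    refine ⟨hfin.toFinset, ?_, ?_, ?_⟩
    · intro y hy; exact (ht (by simpa using hy)).1
    · rw [← htc, Set.ncard_eq_toFinset_card t hfin]
    · intro l hl; exact (ht (by simpa using hl)).2
  induction J with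
  | zero => exact ⟨∅, by simp, by simp, by simp, by simp, by simp⟩
  | succ J ih =>
    obtain ⟨S, hSΛ, hSc, hSb, hS1, hS2⟩ := ih
    obtain ⟨A, hAΛ, hAc, hAb⟩ := hsel (J * L + 1 / 4)
    obtain ⟨B, hBΛ, hBc, hBb⟩ := hsel (-((J + 1) * L) + 1 / 4)
    have hJL : (0 : ℝ) ≤ J * L := by positivity
    have hL0 : (0 : ℝ) ≤ L := by positivity
    have dAB : Disjoint A B := by
      rw [Finset.disjoint_left]; intro l h1 h2
      have := (hAb l h1).1
      have := (hBb l h2).2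
      linarith
    have dS : Disjoint S (A ∪ B) := by
      rw [Finset.disjoint_left]; intro l h1 h2
      have h3 := abs_le.mp (hSb l h1)
      rcases Finset.mem_union.mp h2 with h | h
      · linarith [(hAb l h).1]
      · linarith [(hBb l h).2]
    have hA1 : ∑ l ∈ A, max l 0 ≤ ((L : ℝ) + 1) * ((J + 1) * L) := by
      have := Finset.sum_le_card_nsmul A (fun l => max l 0) ((J + 1) * L) (fun l hl =>
        max_le (by linarith [(hAb l hl).2]) (by positivity))
      rw [hAc, nsmul_eq_mul] at this; push_cast at this; exact this
    have hB1 : ∑ l ∈ B, max (-l) 0 ≤ ((L : ℝ) + 1) * ((J + 1) * L) := by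
      have := Finset.sum_le_card_nsmul B (fun l => max (-l) 0) ((J + 1) * L) (fun l hl =>
        max_le (by linarith [(hBb l hl).1]) (by positivity))
      rw [hBc, nsmul_eq_mul] at this; push_cast at this; exact this
    have hA2 : ∑ l ∈ A, max (-l) 0 = 0 := Finset.sum_eq_zero fun l hl =>
      max_eq_right (by linarith [(hAb l hl).1])
    have hB2 : ∑ l ∈ B, max l 0 = 0 := Finset.sum_eq_zero fun l hl =>
      max_eq_right (by linarith [(hBb l hl).2])
    refine ⟨S ∪ (A ∪ B), ?_, ?_, ?_, ?_, ?_⟩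
    · intro y hy
      simp only [Finset.coe_union, Set.mem_union] at hy
      rcases hy with h | h | h
      · exact hSΛ h
      · exact hAΛ h
      · exact hBΛ h
    · rw [Finset.card_union_of_disjoint dS, Finset.card_union_of_disjoint dAB, hSc, hAc, hBc]; ring
    · intro l hl
      push_cast
      rcases Finset.mem_union.mp hl with h | h
      · linarith [hSb l h]
      · rw [abs_le]
        rcases Finset.mem_union.mp h with h | h
        · constructor <;> linarith [(hAb l h).1, (hAb l h).2]
        · constructor <;> linarith [(hBb l h).1, (hBb l h).2]
    · rw [Finset.sum_union dS, Finset.sum_union dAB, hB2]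
      push_cast; linarith
    · rw [Finset.sum_union dS, Finset.sum_union dAB, hA2]
      push_cast; linarith

lemma key_lemma (a ε : ℝ) (ha : 0 < a) (hε : 0 < ε) (L : ℕ) (hL : 1 ≤ L) :
    ∃ N : ℝ, ∃ η > 0, ∀ Λ : Set ℝ, (∀ x ∈ Λ, ∀ y ∈ Λ, x ≠ y → ε ≤ |x - y|) →
      (∀ x : ℝ, L + 1 ≤ (Λ ∩ Set.Icc x (x + (L - 1 / 2))).ncard) →
      ∀ c : ℤ → ℂ, (∀ n : ℤ, ‖c n‖ ≤ Real.exp |(n : ℝ)| * ‖c 0‖) →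
      ∃ l ∈ Λ, |l| ≤ N ∧ η * ‖c 0‖ ≤ ‖gaussShiftSum (a : ℂ) c l‖ := by
  set κ := 1 - Real.exp (-(a / 2)) with hκ
  have hκ0 : 0 < κ := by
    have : Real.exp (-(a / 2)) < 1 := Real.exp_lt_one_iff.mpr (by linarith)
    linarith
  set C0 := ∑' n : ℤ, Real.exp (1 * |(n : ℝ)| - a * (n : ℝ) ^ 2) with hC0
  have hC0p : 0 < C0 := (summable_gauss a 1 ha).tsum_pos (fun _ => (Real.exp_pos _).le) 0 (Real.exp_pos _)
  set q := Real.log (4 / κ ^ 2) with hq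
  have hqe : Real.exp q = 4 / κ ^ 2 := Real.exp_log (by positivity)
  set D := ((L : ℝ) + 1) * q + a * ((L : ℝ) + 1) * L + L with hD
  have hLR : (1 : ℝ) ≤ L := by exact_mod_cast hL
  obtain ⟨J, hJ⟩ := exists_nat_gt (max 1 (max ((D + 1) / (a * L)) (Real.log (4 * C0))))
  have hJ1 : (1 : ℝ) < J := (le_max_left _ _).trans_lt hJ
  have hJ2 : (D + 1) / (a * L) < J := ((le_max_left _ _).trans (le_max_right _ _)).trans_lt hJ
  have hJ3 : Real.log (4 * C0) < J := ((le_max_right _ _).trans (le_max_right _ _)).trans_lt hJ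
  set T : ℝ := (J : ℝ) * L with hT
  set p : ℕ := J * (L + 1) with hp
  set E : ℝ := ((L : ℝ) + 1) * L * J * (J + 1) / 2 with hE
  set M : ℝ := Real.exp (a * T ^ 2 + T) * C0 with hM
  set Q : ℝ := 4 ^ p * (κ ^ (2 * p))⁻¹ * Real.exp (2 * a * E - 2 * a * T * p) with hQ
  have hT1 : 1 ≤ T := by rw [hT]; nlinarith
  have hQM : Q * M < 1 / 4 := by
    have e1 : (4 : ℝ) ^ p * (κ ^ (2 * p))⁻¹ = Real.exp (p * q) := by
      rw [Real.exp_nat_mul, hqe, div_pow, pow_mul κ 2 p, div_eq_mul_inv]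
    have e2 : Q * M = Real.exp (-(a * L) * J ^ 2 + D * J) * C0 := by
      rw [hQ, hM, e1, ← mul_assoc, ← Real.exp_add, ← Real.exp_add]
      congr 2
      rw [hp, hE, hT, hD]; push_cast; ring
    have e3 : -(a * L) * (J : ℝ) ^ 2 + D * J ≤ -J := by
      rw [div_lt_iff₀ (by positivity)] at hJ2
      nlinarith
    have e4 : Real.exp (-(J : ℝ)) < 1 / (4 * C0) := by
      rw [Real.exp_neg, one_div]
      refine inv_strictAnti₀ (by positivity) ?_
      exact (Real.log_lt_iff_lt_exp (by positivity)).mp hJ3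
    rw [e2]
    calc _ ≤ Real.exp (-(J : ℝ)) * C0 := by gcongr
      _ < 1 / (4 * C0) * C0 := by gcongr
      _ = 1 / 4 := by field_simp
  set K := (1 + 2 * Real.exp (2 * a * T) / (2 * a * ε * Real.exp (-(2 * a * T)))) ^ (2 * p) with hK
  have hQ0 : 0 ≤ Q := by positivity
  have hK0 : 0 ≤ K := by positivity
  set μ : ℝ := 1 / (4 * (1 + (Q + 1) * (2 * p * K))) with hμ
  have hμ0 : 0 < μ := by positivity
  have hμ1 : (Q + 1) * (2 * p * μ * K) < 1 / 4 := by
    have : (Q + 1) * (2 * p * μ * K) = μ * ((Q + 1) * (2 * p * K)) := by ring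
    rw [this, hμ, one_div_mul_eq_div, div_lt_iff₀ (by positivity)]
    linarith
  refine ⟨T, μ * Real.exp (-(a * T ^ 2)), by positivity, ?_⟩
  intro Λ hsep hdens c hc
  obtain ⟨S, hSΛ, hSc, hSb, hS1, hS2⟩ := select_points Λ L hdens J
  by_cases hc0 : ‖c 0‖ = 0
  · have hne : S.Nonempty := by
      rw [← Finset.card_pos, hSc]
      have : 0 < J := by
        have : (0 : ℝ) < J := by linarith
        exact_mod_cast this
      positivity
    obtain ⟨l, hl⟩ := hne
    exact ⟨l, hSΛ hl, by linarith [hSb l hl], by rw [hc0, mul_zero]; exact norm_nonneg _⟩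
  have hc0p : 0 < ‖c 0‖ := lt_of_le_of_ne (norm_nonneg _) (Ne.symm hc0)
  by_contra hcon
  push Not at hcon
  -- normalize
  set d : ℤ → ℂ := fun n => ((‖c 0‖⁻¹ : ℝ) : ℂ) * c n with hd
  have hdb : ∀ n : ℤ, ‖d n‖ ≤ Real.exp |(n : ℝ)| := by
    intro n
    rw [hd]; simp only
    rw [norm_mul, Complex.norm_real, norm_inv, norm_norm, inv_mul_le_iff₀ hc0p]
    linarith [hc n]
  have hd0 : ‖d 0‖ = 1 := by
    rw [hd]; simp only
    rw [norm_mul, Complex.norm_real, norm_inv, norm_norm, inv_mul_cancel₀ hc0]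
  have hgd : ∀ x, gaussShiftSum (a : ℂ) d x = ((‖c 0‖⁻¹ : ℝ) : ℂ) * gaussShiftSum (a : ℂ) c x := by
    intro x
    rw [gaussShiftSum, gaussShiftSum, ← tsum_mul_left]
    refine tsum_congr fun n => ?_
    rw [hd]; ring
  have hz : ∀ l ∈ S, ‖gaussLaurent a d ((Real.exp (2 * a * l) : ℝ) : ℂ)‖ ≤ μ := by
    intro l hl
    have hlT : |l| ≤ T := by linarith [hSb l hl]
    have h1 := hcon l (hSΛ hl) hlT
    have h2 : ‖gaussShiftSum (a : ℂ) d l‖ ≤ μ * Real.exp (-(a * T ^ 2)) := by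
      rw [hgd, norm_mul, Complex.norm_real, norm_inv, norm_norm, inv_mul_le_iff₀ hc0p]
      linarith
    rw [gauss_eq_laurent, norm_mul, Complex.norm_real, Real.norm_of_nonneg (Real.exp_pos _).le] at h2
    have h3 : Real.exp (-(a * T ^ 2)) ≤ Real.exp (-a * l ^ 2) := by
      rw [Real.exp_le_exp]
      have : l ^ 2 ≤ T ^ 2 := sq_le_sq' (by linarith [(abs_le.mp hlT).1]) (abs_le.mp hlT).2
      nlinarith
    have h4 : Real.exp (-a * l ^ 2) * ‖gaussLaurent a d ((Real.exp (2 * a * l) : ℝ) : ℂ)‖ ≤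
        Real.exp (-a * l ^ 2) * μ := by
      refine h2.trans ?_
      rw [mul_comm]
      gcongr
    exact le_of_mul_le_mul_left h4 (Real.exp_pos _)
  have hTc : T = ((J * L : ℕ) : ℤ) := by rw [hT]; push_cast; ring
  have hTn : -T = ((-((J * L : ℕ) : ℤ) : ℤ) : ℝ) := by rw [hT]; push_cast; ring
  have hfin : ‖d 0‖ ≤ Q * (M + 2 * p * μ * K) + 2 * p * μ * K := by
    refine laurent_coeff a ha d hdb _ fun w hw => ?_
    refine approx_zero_bound a T E M μ ε p S ha hT1 hε hμ0.le hSc hSb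
      (fun x hx y hy => hsep x (hSΛ hx) y (hSΛ hy)) hS1 hS2 (gaussLaurent a d)
      (laurent_diff a ha d hdb) hz ?_ ?_ w hw
    · intro v hv
      have := laurent_bound a ha d hdb (-((J * L : ℕ) : ℤ)) v (by
        rw [hv, ← hTn]; congr 1; ring)
      rw [← hTn, abs_neg, neg_sq, abs_of_nonneg (by linarith)] at this
      exact this
    · intro v hv
      have := laurent_bound a ha d hdb ((J * L : ℕ) : ℤ) v (by rw [hv, ← hTc])
      rw [← hTc, abs_of_nonneg (by linarith)] at this
      exact this
  rw [hd0] at hfin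
  linarith

lemma tsum_cauchy {ι : Type*} (u h : ι → ℝ) (hh : ∀ i, 0 ≤ h i) (hs : Summable h)
    (hpos : 0 < ∑' i, h i) (hu : ∀ i, 0 ≤ u i) (hus : Summable (fun i => u i ^ 2 * h i)) :
    Summable (fun i => u i * h i) ∧
      (∑' i, u i * h i) ^ 2 ≤ (∑' i, h i) * ∑' i, u i ^ 2 * h i := by
  have h1 : Summable (fun i => u i * h i) := by
    refine Summable.of_nonneg_of_le (fun i => mul_nonneg (hu i) (hh i)) (fun i => ?_) (hus.add hs)
    nlinarith [hh i, sq_nonneg (u i - 1), mul_nonneg (hh i) (sq_nonneg (u i - 1)), mul_nonneg (hu i) (hh i)]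
  refine ⟨h1, ?_⟩
  set X := ∑' i, u i ^ 2 * h i
  set Y := ∑' i, u i * h i
  set Z := ∑' i, h i
  have h2 : HasSum (fun i => u i ^ 2 * h i - 2 * (Y / Z) * (u i * h i) + (Y / Z) ^ 2 * h i)
      (X - 2 * (Y / Z) * Y + (Y / Z) ^ 2 * Z) :=
    (hus.hasSum.sub (h1.hasSum.mul_left _)).add (hs.hasSum.mul_left _)
  have h3 : 0 ≤ X - 2 * (Y / Z) * Y + (Y / Z) ^ 2 * Z := by
    refine h2.nonneg fun i => ?_
    have : u i ^ 2 * h i - 2 * (Y / Z) * (u i * h i) + (Y / Z) ^ 2 * h i = (u i - Y / Z) ^ 2 * h i := by ring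
    rw [this]
    exact mul_nonneg (sq_nonneg _) (hh i)
  have h4 : X - 2 * (Y / Z) * Y + (Y / Z) ^ 2 * Z = (Z * X - Y ^ 2) / Z := by field_simp; ring
  rw [h4] at h3
  have := (div_nonneg_iff.mp h3)
  rcases this with h | h <;> linarith [h.1, h.2]

lemma density_extract (Λ : Set ℝ) (hdens : 1 < lowerBeurlingDensity Λ) :
    ∃ L : ℕ, 1 ≤ L ∧ ∀ x : ℝ, L + 1 ≤ (Λ ∩ Set.Icc x (x + (L - 1 / 2))).ncard := by
  rw [lowerBeurlingDensity, liminf_eq] at hdens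
  obtain ⟨b, hb, hb1⟩ := exists_lt_of_lt_csSup (by
    by_contra h
    rw [Set.not_nonempty_iff_eq_empty] at h
    rw [h, Real.sSup_empty] at hdens
    linarith) hdens
  obtain ⟨R, hR⟩ := eventually_atTop.mp hb
  obtain ⟨L, hL⟩ := exists_nat_gt (max 1 (max (R + 1) ((1 + b / 2) / (b - 1))))
  have h1 : (1 : ℝ) < L := (le_max_left _ _).trans_lt hL
  have h2 : R + 1 < L := ((le_max_left _ _).trans (le_max_right _ _)).trans_lt hL
  have h3 : (1 + b / 2) / (b - 1) < L := ((le_max_right _ _).trans (le_max_right _ _)).trans_lt hL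
  rw [div_lt_iff₀ (by linarith)] at h3
  refine ⟨L, by exact_mod_cast h1.le, fun x => ?_⟩
  have h4 := hR (L - 1 / 2) (by linarith)
  rw [le_div_iff₀ (by linarith)] at h4
  have h5 : (⨅ x : ℝ, ((Λ ∩ Set.Icc x (x + (L - 1 / 2))).ncard : ℝ)) ≤
      ((Λ ∩ Set.Icc x (x + (L - 1 / 2))).ncard : ℝ) :=
    ciInf_le ⟨0, by rintro _ ⟨y, rfl⟩; positivity⟩ x
  have h6 : ((L + 1 : ℕ) : ℝ) ≤ ((Λ ∩ Set.Icc x (x + (L - 1 / 2))).ncard : ℝ) := by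
    refine le_trans ?_ (h4.trans h5)
    push_cast
    linarith
  exact_mod_cast h6

lemma gauss_translate (a : ℂ) (c : ℤ → ℂ) (k : ℤ) (x : ℝ) :
    gaussShiftSum a (fun n => c (n + k)) (x - k) = gaussShiftSum a c x := by
  rw [gaussShiftSum, gaussShiftSum, ← (Equiv.addRight k).tsum_eq
    (fun n : ℤ => c n * Complex.exp (-a * ((x : ℂ) - (n : ℂ)) ^ 2))]
  refine tsum_congr fun n => ?_
  simp only [Equiv.coe_addRight]
  push_cast
  congr 3
  ring

lemma gauss_local (a ε : ℝ) (ha : 0 < a) (hε : 0 < ε) (L : ℕ) (hL : 1 ≤ L) (Λ : Set ℝ)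
    (hsep : ∀ x ∈ Λ, ∀ y ∈ Λ, x ≠ y → ε ≤ |x - y|)
    (hdens : ∀ x : ℝ, L + 1 ≤ (Λ ∩ Set.Icc x (x + (L - 1 / 2))).ncard) :
    ∃ C > 0, ∀ c : ℤ → ℂ, Summable (fun n => ‖c n‖ ^ 2) → ∀ n : ℤ, ∃ l : Λ,
      ‖c n‖ ^ 2 ≤ C * (‖gaussShiftSum (a : ℂ) c l‖ ^ 2 * Real.exp (-1 * |(n : ℝ) - l|)) := by
  obtain ⟨N, η, hη, hkey⟩ := key_lemma a ε ha hε L hL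
  refine ⟨(η⁻¹) ^ 2 * Real.exp N, by positivity, ?_⟩
  intro c hc n
  -- choose a dominating index
  have hmax : ∃ k : ℤ, ∀ m : ℤ, ‖c m‖ * Real.exp (-|(m : ℝ) - n|) ≤ ‖c k‖ * Real.exp (-|(k : ℝ) - n|) := by
    by_cases h0 : ∀ m, c m = 0
    · exact ⟨0, fun m => by simp [h0]⟩
    push Not at h0
    obtain ⟨m0, hm0⟩ := h0
    have ht0 : Tendsto (fun m : ℤ => ‖c m‖) cofinite (nhds 0) := by
      have h1 := hc.tendsto_cofinite_zero
      have h2 := h1.sqrt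
      simpa using h2
    have hpos : 0 < ‖c m0‖ * Real.exp (-|(m0 : ℝ) - n|) := by
      have := norm_pos_iff.mpr hm0
      positivity
    refine Continuous.exists_forall_ge' (f := fun m : ℤ => ‖c m‖ * Real.exp (-|(m : ℝ) - n|))
      continuous_of_discreteTopology m0 ?_
    rw [cocompact_eq_cofinite]
    filter_upwards [ht0.eventually_lt_const hpos] with m hm
    refine le_trans ?_ hm.le
    refine mul_le_of_le_one_right (norm_nonneg _) (Real.exp_le_one_iff.mpr ?_)
    linarith [abs_nonneg ((m : ℝ) - n)]
  obtain ⟨k, hk⟩ := hmax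
  obtain ⟨l, hl, hlN, hlη⟩ := hkey {x | x + k ∈ Λ}
    (by
      intro x hx y hy hxy
      have := hsep _ hx _ hy (by simpa using hxy)
      simpa using this)
    (by
      intro x
      refine (hdens (x + k)).trans ?_
      refine le_of_eq ?_
      rw [← Set.ncard_image_of_injective ({x | x + (k : ℝ) ∈ Λ} ∩ Set.Icc x (x + (L - 1 / 2))) (add_left_injective (k : ℝ))]
      congr 1
      ext y
      simp only [Set.mem_inter_iff, Set.mem_Icc, Set.mem_image, Set.mem_ofPred_eq]
      constructor
      · rintro ⟨h1, h2, h3⟩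
        exact ⟨y - k, ⟨by simpa using h1, by linarith, by linarith⟩, by ring⟩
      · rintro ⟨z, ⟨h1, h2, h3⟩, rfl⟩
        exact ⟨h1, by linarith, by linarith⟩)
    (fun m => c (m + k)) (by
      intro m
      have h1 := hk (m + k)
      rw [zero_add]
      have h2 : ‖c (m + k)‖ ≤ ‖c k‖ * Real.exp (-|(k : ℝ) - n|) * Real.exp |((m + k : ℤ) : ℝ) - n| := by
        rw [Real.exp_neg (|((m + k : ℤ) : ℝ) - n|), ← div_eq_mul_inv, div_le_iff₀ (Real.exp_pos _)] at h1
        exact h1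
      refine h2.trans ?_
      rw [mul_assoc, ← Real.exp_add, mul_comm]
      gcongr
      push_cast
      have := abs_add_le (m : ℝ) ((k : ℝ) - n)
      have e : (m : ℝ) + k - n = m + (k - n) := by ring
      rw [e]; linarith)
  refine ⟨⟨l + k, hl⟩, ?_⟩
  have hg := gauss_translate (a : ℂ) c k (l + k)
  rw [add_sub_cancel_right] at hg
  rw [zero_add, hg] at hlη
  simp only
  set g := ‖gaussShiftSum (a : ℂ) c (l + k)‖
  have h1 : ‖c n‖ ≤ ‖c k‖ * Real.exp (-|(k : ℝ) - n|) := by simpa using hk n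
  have h2 : ‖c k‖ ≤ η⁻¹ * g := by
    rw [inv_mul_eq_div, le_div_iff₀ hη]; linarith
  have h3 : ‖c n‖ ≤ η⁻¹ * g * Real.exp (-|(k : ℝ) - n|) := h1.trans (by gcongr)
  have h4 : Real.exp (-|(k : ℝ) - n|) ^ 2 ≤ Real.exp N * Real.exp (-1 * |(n : ℝ) - (l + k)|) := by
    rw [← Real.exp_nat_mul, ← Real.exp_add, Real.exp_le_exp]
    have h5 := abs_add_le ((n : ℝ) - k) (-l)
    rw [abs_neg, show (n : ℝ) - k + -l = n - (l + k) by ring, abs_sub_comm (n : ℝ) k] at h5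
    have := abs_nonneg ((k : ℝ) - n)
    push_cast
    linarith
  calc ‖c n‖ ^ 2 ≤ (η⁻¹ * g * Real.exp (-|(k : ℝ) - n|)) ^ 2 := by gcongr
    _ = (η⁻¹) ^ 2 * g ^ 2 * Real.exp (-|(k : ℝ) - n|) ^ 2 := by ring
    _ ≤ (η⁻¹) ^ 2 * g ^ 2 * (Real.exp N * Real.exp (-1 * |(n : ℝ) - (l + k)|)) := by gcongr
    _ = _ := by ring

lemma gauss_pointwise (a : ℝ) (ha : 0 < a) :
    ∃ C > 0, ∀ (c : ℤ → ℂ) (x : ℝ),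
      Summable (fun n : ℤ => ‖c n‖ ^ 2 * Real.exp (-(2 * a) * |x - n|)) →
      ‖gaussShiftSum (a : ℂ) c x‖ ^ 2 ≤ C * ∑' n : ℤ, ‖c n‖ ^ 2 * Real.exp (-(2 * a) * |x - n|) := by
  have h2a : 0 < 2 * a := by positivity
  set C1 := Real.exp (2 * a) * ∑' m : ℤ, Real.exp (-(2 * a) * |(m : ℝ)|) with hC1
  have hC1p : 0 < C1 := by
    have : 0 < ∑' m : ℤ, Real.exp (-(2 * a) * |(m : ℝ)|) :=
      (summable_exp_abs _ h2a).tsum_pos (fun _ => (Real.exp_pos _).le) 0 (Real.exp_pos _)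
    positivity
  refine ⟨Real.exp a ^ 2 * C1, by positivity, ?_⟩
  intro c x hs
  obtain ⟨e1, e2⟩ := exp_abs_shift (2 * a) h2a x
  simp_rw [abs_sub_comm _ x] at e1 e2
  obtain ⟨f1, f2⟩ := tsum_cauchy (fun n : ℤ => ‖c n‖) (fun n : ℤ => Real.exp (-(2 * a) * |x - n|))
    (fun _ => (Real.exp_pos _).le) e1 (e1.tsum_pos (fun _ => (Real.exp_pos _).le) 0 (Real.exp_pos _))
    (fun _ => norm_nonneg _) hs
  have hb : ‖gaussShiftSum (a : ℂ) c x‖ ≤ Real.exp a * ∑' n : ℤ, ‖c n‖ * Real.exp (-(2 * a) * |x - n|) := by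
    rw [gaussShiftSum]
    refine tsum_of_norm_bounded (f1.hasSum.mul_left (Real.exp a)) fun n => ?_
    have : -(a : ℂ) * ((x : ℂ) - n) ^ 2 = ((-a * (x - n) ^ 2 : ℝ) : ℂ) := by push_cast; ring
    rw [norm_mul, this, ← Complex.ofReal_exp, Complex.norm_real, Real.norm_of_nonneg (Real.exp_pos _).le,
      mul_left_comm, ← Real.exp_add]
    gcongr
    rw [← sq_abs (x - n)]
    nlinarith [mul_nonneg ha.le (sq_nonneg (|x - n| - 1))]
  calc _ ≤ (Real.exp a * ∑' n : ℤ, ‖c n‖ * Real.exp (-(2 * a) * |x - n|)) ^ 2 := by gcongr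
    _ = Real.exp a ^ 2 * (∑' n : ℤ, ‖c n‖ * Real.exp (-(2 * a) * |x - n|)) ^ 2 := by ring
    _ ≤ Real.exp a ^ 2 * ((∑' n : ℤ, Real.exp (-(2 * a) * |x - n|)) *
        ∑' n : ℤ, ‖c n‖ ^ 2 * Real.exp (-(2 * a) * |x - n|)) := by gcongr
    _ ≤ Real.exp a ^ 2 * (C1 * ∑' n : ℤ, ‖c n‖ ^ 2 * Real.exp (-(2 * a) * |x - n|)) := by
      gcongr
    _ = _ := by ring

/-- every separated `Λ ⊂ ℝ` with `D⁻(Λ) > 1` is sampling for `V²_a`. -/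
theorem statement0 (a : ℝ) (ha : 0 < a) (Λ : Set ℝ)
    (hsep : IsSeparatedSet Λ) (hdens : 1 < lowerBeurlingDensity Λ) :
    IsSamplingV2 (a : ℂ) Λ := by
  obtain ⟨ε, hε, hsep⟩ := hsep
  obtain ⟨L, hL, hdens⟩ := density_extract Λ hdens
  obtain ⟨C1, hC1, hloc⟩ := gauss_local a ε ha hε L hL Λ hsep hdens
  obtain ⟨C2, hC2, hpt⟩ := gauss_pointwise a ha
  obtain ⟨C3, hC3, hsum⟩ := exp_abs_sep (2 * a) ε (by positivity) hε Λ hsep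
  set C4 := Real.exp 1 * ∑' m : ℤ, Real.exp (-1 * |(m : ℝ)|) with hC4
  have hC4p : 0 < C4 := by
    have : 0 < ∑' m : ℤ, Real.exp (-1 * |(m : ℝ)|) :=
      (summable_exp_abs 1 one_pos).tsum_pos (fun _ => (Real.exp_pos _).le) 0 (Real.exp_pos _)
    positivity
  refine ⟨(C1 * C4)⁻¹, by positivity, C2 * C3, by positivity, ?_⟩
  intro c hc
  obtain ⟨s1, s2, s3⟩ := schur_bound (fun n : ℤ => ‖c n‖ ^ 2)
    (fun (n : ℤ) (l : Λ) => Real.exp (-(2 * a) * |(l : ℝ) - n|)) C3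
    (fun _ => by positivity) (fun _ _ => by positivity) hc (fun n => (hsum n).1) (fun n => (hsum n).2)
  have hf : Summable (fun l : Λ => ‖gaussShiftSum (a : ℂ) c (l : ℝ)‖ ^ 2) :=
    Summable.of_nonneg_of_le (fun _ => by positivity) (fun l => hpt c l (s1 l)) (s2.mul_left C2)
  obtain ⟨t1, t2, t3⟩ := schur_bound (fun l : Λ => ‖gaussShiftSum (a : ℂ) c (l : ℝ)‖ ^ 2)
    (fun (l : Λ) (n : ℤ) => Real.exp (-1 * |(n : ℝ) - l|)) C4
    (fun _ => by positivity) (fun _ _ => by positivity) hf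
    (fun l => (exp_abs_shift 1 one_pos l).1) (fun l => (exp_abs_shift 1 one_pos l).2)
  constructor
  · rw [inv_mul_le_iff₀ (by positivity)]
    calc ∑' n : ℤ, ‖c n‖ ^ 2
        ≤ ∑' n : ℤ, C1 * ∑' l : Λ, ‖gaussShiftSum (a : ℂ) c (l : ℝ)‖ ^ 2 * Real.exp (-1 * |(n : ℝ) - l|) := by
          refine Summable.tsum_le_tsum (fun n => ?_) hc (t2.mul_left C1)
          obtain ⟨l, hl⟩ := hloc c hc n
          refine hl.trans (mul_le_mul_of_nonneg_left ?_ hC1.le)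
          exact (t1 n).le_tsum l (fun _ _ => by positivity)
      _ = C1 * ∑' n : ℤ, ∑' l : Λ, ‖gaussShiftSum (a : ℂ) c (l : ℝ)‖ ^ 2 * Real.exp (-1 * |(n : ℝ) - l|) :=
          tsum_mul_left
      _ ≤ C1 * (C4 * ∑' l : Λ, ‖gaussShiftSum (a : ℂ) c (l : ℝ)‖ ^ 2) := by gcongr
      _ = _ := by ring
  · calc ∑' l : Λ, ‖gaussShiftSum (a : ℂ) c (l : ℝ)‖ ^ 2
        ≤ ∑' l : Λ, C2 * ∑' n : ℤ, ‖c n‖ ^ 2 * Real.exp (-(2 * a) * |(l : ℝ) - n|) :=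
          Summable.tsum_le_tsum (fun l => hpt c l (s1 l)) hf (s2.mul_left C2)
      _ = C2 * ∑' l : Λ, ∑' n : ℤ, ‖c n‖ ^ 2 * Real.exp (-(2 * a) * |(l : ℝ) - n|) := tsum_mul_left
      _ ≤ C2 * (C3 * ∑' n : ℤ, ‖c n‖ ^ 2) := by gcongr
      _ = _ := by ring
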